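/- (Converse) Let σ_s, σ_w > 0 with σ_s² < σ_w², and set α = σ_s²/(σ_s²+σ_w²). Let (Λ_n)_{n≥1} be a sequence of full-rank lattices Λ_n ⊂ ℝ^n. For each n let X_n ~ D_{Λ_n, σ_s} and W_n ~ N(0, σ_w² I_n) be independent, and let P_e(Λ_n) = Pr[(α−1)X_n + αW_n ∉ V(Λ_n)] (the error probability of the maximum-a-posteriori decoder). If (1/n)·H(X_n) → (1/2)·log(1 + σ_s²/σ_w²) as n → ∞, then P_e(Λ_n) is bounded away from 0, i.e. liminf_{n→∞} P_e(Λ_n) > 0. -/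

import Mathlib

open MeasureTheory Real Filter Pointwise
open scoped ENNReal RealInnerProductSpace

noncomputable section

/-- The (continuous) Gaussian density with parameter `σ` on `ℝⁿ`:
`f_σ(x) = (2πσ²)^{-n/2} exp(-‖x‖²/(2σ²))`. -/
def gaussF (n : ℕ) (σ : ℝ) (x : EuclideanSpace ℝ (Fin n)) : ℝ :=
  (2 * π * σ ^ 2) ^ (-(n : ℝ) / 2) * Real.exp (-‖x‖ ^ 2 / (2 * σ ^ 2))

/-- The Gaussian mass `f_σ(S) = Σ_{y ∈ S} f_σ(y)` of a (countable) set `S ⊆ ℝⁿ`. -/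
def gaussMass (n : ℕ) (σ : ℝ) (S : Set (EuclideanSpace ℝ (Fin n))) : ℝ :=
  ∑' y : S, gaussF n σ y

/-- The Gaussian measure `N(0, σ² Iₙ)` on `ℝⁿ`, given by its density w.r.t. Lebesgue measure. -/
def gaussMeasure (n : ℕ) (σ : ℝ) : Measure (EuclideanSpace ℝ (Fin n)) :=
  volume.withDensity fun x => ENNReal.ofReal (gaussF n σ x)

/-- The coset `S + t` of a set `S ⊆ ℝⁿ`, i.e. `{x | x - t ∈ S}`. -/
def coset (n : ℕ) (S : Set (EuclideanSpace ℝ (Fin n))) (t : EuclideanSpace ℝ (Fin n)) :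
    Set (EuclideanSpace ℝ (Fin n)) := {x | x - t ∈ S}

/-- The Voronoi cell of `S`: `{x | ⟪x,y⟫ ≤ ‖y‖²/2 for all y ∈ S}`. -/
def voronoi (n : ℕ) (S : Set (EuclideanSpace ℝ (Fin n))) : Set (EuclideanSpace ℝ (Fin n)) :=
  {x | ∀ y ∈ S, ⟪x, y⟫ ≤ ‖y‖ ^ 2 / 2}

/-- The inverse error function `err⁻¹_ε(Λ)`: the least `s > 0` such that a standard Gaussian
leaves `s · V(Λ)` with probability at most `ε`. -/
def errInv (n : ℕ) (ε : ℝ) (S : Set (EuclideanSpace ℝ (Fin n))) : ℝ :=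
  sInf {s : ℝ | 0 < s ∧ gaussMeasure n 1 ((s • voronoi n S)ᶜ) ≤ ENNReal.ofReal ε}

/-- The Shannon entropy (in nats) of the discrete Gaussian `D_{S,σ}` supported on `S`,
which assigns mass `f_σ(y)/f_σ(S)` to each `y ∈ S`. -/
def dgEntropy (n : ℕ) (σ : ℝ) (S : Set (EuclideanSpace ℝ (Fin n))) : ℝ :=
  -∑' y : S, (gaussF n σ y / gaussMass n σ S) * Real.log (gaussF n σ y / gaussMass n σ S)

/-- The flatness factor `ε_Λ(σ) = sup_{x ∈ V(Λ)} |V(Λ)·f_σ(Λ+x) − 1|`. -/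
def flatness (n : ℕ) (L : Submodule ℤ (EuclideanSpace ℝ (Fin n))) (σ : ℝ) : ℝ :=
  ⨆ x : voronoi n (L : Set (EuclideanSpace ℝ (Fin n))),
    |ZLattice.covolume L volume *
        gaussMass n σ (coset n (L : Set (EuclideanSpace ℝ (Fin n))) x) - 1|

lemma lat_summable {n : ℕ} (L : Submodule ℤ (EuclideanSpace ℝ (Fin n))) [DiscreteTopology L]
    {a : ℝ} (ha : 0 < a) :
    Summable fun y : L => Real.exp (-(a * ‖(y : EuclideanSpace ℝ (Fin n))‖ ^ 2)) := by
  set m := Module.finrank ℤ L + 1 with hm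
  have h1 := (ZLattice.summable_norm_pow_inv L (2 * m) (by omega)).mul_left ((m.factorial : ℝ) / a ^ m)
  refine Summable.of_norm_bounded_eventually h1 ?_
  have : ({0} : Set L).Finite := Set.finite_singleton 0
  filter_upwards [this.compl_mem_cofinite] with y hy
  have hy0 : 0 < ‖y‖ := by
    rw [norm_pos_iff]; exact hy
  have hn : ‖(y : EuclideanSpace ℝ (Fin n))‖ = ‖y‖ := rfl
  rw [hn, Real.norm_eq_abs, abs_of_pos (Real.exp_pos _), Real.exp_neg]
  have hx : 0 < a * ‖y‖ ^ 2 := by positivity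
  have := Real.pow_div_factorial_le_exp (x := a * ‖y‖ ^ 2) hx.le m
  have h3 : 0 < (a * ‖y‖ ^ 2) ^ m / (m.factorial : ℝ) := by positivity
  calc (Real.exp (a * ‖y‖ ^ 2))⁻¹ ≤ ((a * ‖y‖ ^ 2) ^ m / (m.factorial : ℝ))⁻¹ := by gcongr
    _ = _ := by
      rw [mul_pow, inv_div, inv_pow, pow_mul]
      field_simp

lemma lat_doubling_aux {n : ℕ} (L : Submodule ℤ (EuclideanSpace ℝ (Fin n))) [DiscreteTopology L]
    [IsZLattice ℝ L] (a : ℝ) :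
    (∑' y : L, ENNReal.ofReal (Real.exp (-(a / 2 * ‖(y : EuclideanSpace ℝ (Fin n))‖ ^ 2)))) ^ 2 ≤
    2 ^ n * (∑' y : L, ENNReal.ofReal (Real.exp (-(a * ‖(y : EuclideanSpace ℝ (Fin n))‖ ^ 2)))) ^ 2 := by
  classical
  have hfin : Module.Finite ℤ L := ZLattice.module_finite ℝ L
  have hfree : Module.Free ℤ L := ZLattice.module_free ℝ L
  have hrank : Module.finrank ℤ L = n := by
    rw [ZLattice.rank ℝ L]; simp
  let b := Module.finBasis ℤ L
  let pr : L → (Fin (Module.finrank ℤ L) → ZMod 2) := fun u i => (b.repr u i : ZMod 2)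
  have key : ∀ u v : L, pr u = pr v → ∃ w : L, u - v = w + w := by
    intro u v h
    have h1 : ∀ i, ∃ k : ℤ, b.repr (u - v) i = k + k := by
      intro i
      have h2 : (b.repr u i : ZMod 2) = (b.repr v i : ZMod 2) := congrFun h i
      rw [ZMod.intCast_eq_intCast_iff_dvd_sub] at h2
      obtain ⟨k, hk⟩ := h2
      refine ⟨-k, ?_⟩
      rw [map_sub, Finsupp.sub_apply]
      push_cast at hk
      linarith
    choose k hk using h1
    refine ⟨∑ i, k i • b i, ?_⟩
    rw [← Finset.sum_add_distrib, ← b.sum_repr (u - v)]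
    refine Finset.sum_congr rfl fun i _ => ?_
    rw [hk, add_smul]
  set G : L → ℝ≥0∞ := fun y => ENNReal.ofReal (Real.exp (-(a / 2 * ‖(y : EuclideanSpace ℝ (Fin n))‖ ^ 2))) with hG
  set H : L → ℝ≥0∞ := fun y => ENNReal.ofReal (Real.exp (-(a * ‖(y : EuclideanSpace ℝ (Fin n))‖ ^ 2))) with hH
  have hfib : ∑' y : L, G y = ∑ d, ∑' u : pr ⁻¹' {d}, G u := by
    rw [← ENNReal.tsum_fiberwise G pr, tsum_fintype]
  have hcs : (∑ d, ∑' u : pr ⁻¹' {d}, G u) ^ 2 ≤ 2 ^ n * ∑ d, (∑' u : pr ⁻¹' {d}, G u) ^ 2 := by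
    have := ENNReal.rpow_sum_le_const_mul_sum_rpow (Finset.univ) (fun d => ∑' u : pr ⁻¹' {d}, G u)
      (p := 2) (by norm_num)
    have hc : (Finset.univ : Finset (Fin (Module.finrank ℤ L) → ZMod 2)).card = 2 ^ n := by
      rw [Finset.card_univ, Fintype.card_fun, ZMod.card, Fintype.card_fin, hrank]
    rw [hc] at this
    norm_num at this
    exact_mod_cast this
  rw [hfib]
  refine hcs.trans ?_
  gcongr
  let T := Σ d, (pr ⁻¹' {d}) × (pr ⁻¹' {d})
  have hk2 : ∀ t : T, ∃ w : L, (t.2.1 : L) - t.2.2 = w + w := by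
    intro t
    apply key
    have h1 := t.2.1.2
    have h2 := t.2.2.2
    simp only [Set.mem_preimage, Set.mem_singleton_iff] at h1 h2
    rw [h1, h2]
  choose w hw using hk2
  let F : T → L × L := fun t => (t.2.2 + w t, w t)
  have hF : Function.Injective F := by
    rintro ⟨d, u, v⟩ ⟨d', u', v'⟩ h
    have e1 : (v : L) = v' := by
      have h1 := congrArg Prod.fst h
      have h2 := congrArg Prod.snd h
      simp only [F] at h1 h2
      rw [h2] at h1
      exact add_right_cancel h1
    have e2 : (u : L) = u' := by
      have h2 := congrArg Prod.snd h
      have a1 := hw ⟨d, u, v⟩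
      have a2 := hw ⟨d', u', v'⟩
      simp only [F] at h2 a1 a2
      rw [h2, ← a2, e1] at a1
      exact sub_left_injective a1
    have e3 : d = d' := by
      have h1 := u.2
      have h2 := u'.2
      simp only [Set.mem_preimage, Set.mem_singleton_iff] at h1 h2
      rw [← h1, ← h2, e2]
    subst e3
    have e1' := Subtype.ext e1
    have e2' := Subtype.ext e2
    rw [e1', e2']
  calc ∑ d, (∑' u : pr ⁻¹' {d}, G u) ^ 2
      = ∑' t : T, G t.2.1 * G t.2.2 := by
        rw [ENNReal.tsum_sigma', tsum_fintype]
        refine Finset.sum_congr rfl fun d _ => ?_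
        rw [ENNReal.tsum_prod', sq, ← ENNReal.tsum_mul_right]
        refine tsum_congr fun u => ?_
        rw [← ENNReal.tsum_mul_left]
    _ = ∑' t : T, H (F t).1 * H (F t).2 := by
        refine tsum_congr fun t => ?_
        simp only [hG, hH, F]
        rw [← ENNReal.ofReal_mul (Real.exp_pos _).le, ← ENNReal.ofReal_mul (Real.exp_pos _).le,
          ← Real.exp_add, ← Real.exp_add]
        congr 2
        have h1 : ((t.2.1 : L) : EuclideanSpace ℝ (Fin n)) = ((t.2.2 + w t : L) : EuclideanSpace ℝ (Fin n)) + (w t) := by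
          have := hw t
          rw [sub_eq_iff_eq_add] at this
          rw [this]; push_cast; abel
        have h2 : ((t.2.2 : L) : EuclideanSpace ℝ (Fin n)) = ((t.2.2 + w t : L) : EuclideanSpace ℝ (Fin n)) - (w t) := by
          push_cast; abel
        have := parallelogram_law_with_norm ℝ ((t.2.2 + w t : L) : EuclideanSpace ℝ (Fin n)) (w t)
        rw [← h1, ← h2] at this
        linear_combination (-a / 2) * this
    _ ≤ ∑' q : L × L, H q.1 * H q.2 :=
        ENNReal.tsum_comp_le_tsum_of_injective hF (fun q => H q.1 * H q.2)
    _ = (∑' y : L, H y) ^ 2 := by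
        rw [ENNReal.tsum_prod', sq, ← ENNReal.tsum_mul_right]
        refine tsum_congr fun u => ?_
        rw [← ENNReal.tsum_mul_left]

lemma lat_doubling {n : ℕ} (L : Submodule ℤ (EuclideanSpace ℝ (Fin n))) [DiscreteTopology L]
    [IsZLattice ℝ L] {a : ℝ} (ha : 0 < a) :
    (∑' y : L, Real.exp (-(a / 2 * ‖(y : EuclideanSpace ℝ (Fin n))‖ ^ 2))) ^ 2 ≤
    2 ^ n * (∑' y : L, Real.exp (-(a * ‖(y : EuclideanSpace ℝ (Fin n))‖ ^ 2))) ^ 2 := by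
  have h := lat_doubling_aux L a
  rw [← ENNReal.ofReal_tsum_of_nonneg (fun _ => (Real.exp_pos _).le) (lat_summable L (half_pos ha)),
    ← ENNReal.ofReal_tsum_of_nonneg (fun _ => (Real.exp_pos _).le) (lat_summable L ha)] at h
  have p1 : 0 ≤ ∑' y : L, Real.exp (-(a * ‖(y : EuclideanSpace ℝ (Fin n))‖ ^ 2)) :=
    tsum_nonneg fun _ => (Real.exp_pos _).le
  have p2 : 0 ≤ ∑' y : L, Real.exp (-(a / 2 * ‖(y : EuclideanSpace ℝ (Fin n))‖ ^ 2)) :=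
    tsum_nonneg fun _ => (Real.exp_pos _).le
  rw [← ENNReal.ofReal_pow p1, ← ENNReal.ofReal_pow p2] at h
  have h2 : (2 : ℝ≥0∞) ^ n = ENNReal.ofReal (2 ^ n) := by
    rw [ENNReal.ofReal_pow (by norm_num)]; simp
  rw [h2, ← ENNReal.ofReal_mul (by positivity)] at h
  exact (ENNReal.ofReal_le_ofReal_iff (by positivity)).1 h

lemma sq_le_exp_aux (n s : ℝ) (hs : 0 ≤ s) (hn : 0 ≤ n) :
    s ^ 2 ≤ 8 * n ^ 2 + 16 * Real.exp (s / 2 - n) := by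
  have he := Real.exp_pos (s / 2 - n)
  by_cases h : s / 2 ≤ n
  · nlinarith
  · push Not at h
    have h1 := Real.pow_div_factorial_le_exp (x := s / 2 - n) (by linarith) 2
    norm_num [Nat.factorial] at h1
    nlinarith [sq_nonneg (s / 2 - 2 * n)]

lemma abs_stats {ι : Type*} (s : ι → ℝ) (hs : ∀ i, 0 ≤ s i) (n : ℕ) (hn : 1 ≤ n)
    (T S : ℝ) (hT : HasSum (fun i => Real.exp (-s i)) T)
    (hS : HasSum (fun i => Real.exp (-(s i / 2))) S) (hTpos : 0 < T)
    (hST : S ^ 2 ≤ 2 ^ n * T ^ 2) :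
    HasSum (fun i => Real.exp (-s i) / T) 1 ∧
    ∃ m, HasSum (fun i => Real.exp (-s i) / T * s i) m ∧
      (-∑' i, Real.exp (-s i) / T * Real.log (Real.exp (-s i) / T) = Real.log T + m) ∧
      ∀ η : ℝ, 0 < η → η ≤ 1 → η ^ 2 / 24 ≤
        ∑' i, Set.indicator {i | m - n * η ≤ s i} (fun i => Real.exp (-s i) / T) i := by
  have hp : HasSum (fun i => Real.exp (-s i) / T) 1 := by
    have := hT.div_const T
    rwa [div_self hTpos.ne'] at this
  have hppos : ∀ i, 0 < Real.exp (-s i) / T := fun i => by positivity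
  have hn1 : (1 : ℝ) ≤ n := by exact_mod_cast hn
  have hS0 : 0 ≤ S := hS.nonneg fun i => (Real.exp_pos _).le
  have hmaj : HasSum (fun i => 8 * (n : ℝ) ^ 2 * (Real.exp (-s i) / T) +
      16 * Real.exp (-n) / T * Real.exp (-(s i / 2))) (8 * (n : ℝ) ^ 2 * 1 + 16 * Real.exp (-n) / T * S) :=
    (hp.mul_left _).add (hS.mul_left _)
  have hle : ∀ i, Real.exp (-s i) / T * s i ^ 2 ≤ 8 * (n : ℝ) ^ 2 * (Real.exp (-s i) / T) +
      16 * Real.exp (-n) / T * Real.exp (-(s i / 2)) := by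
    intro i
    have h1 := mul_le_mul_of_nonneg_left (sq_le_exp_aux n (s i) (hs i) (by linarith)) (hppos i).le
    have h2 : Real.exp (-n) * Real.exp (-(s i / 2)) = Real.exp (-s i) * Real.exp (s i / 2 - n) := by
      rw [← Real.exp_add, ← Real.exp_add]; congr 1; ring
    have h3 : 16 * Real.exp (-n) / T * Real.exp (-(s i / 2)) =
        Real.exp (-s i) / T * (16 * Real.exp (s i / 2 - n)) := by
      calc _ = 16 / T * (Real.exp (-n) * Real.exp (-(s i / 2))) := by ring
        _ = _ := by rw [h2]; ring
    rw [h3]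
    linarith
  have hs2 : Summable (fun i => Real.exp (-s i) / T * s i ^ 2) :=
    Summable.of_nonneg_of_le (fun i => mul_nonneg (hppos i).le (sq_nonneg _)) hle hmaj.summable
  have hM : ∑' i, Real.exp (-s i) / T * s i ^ 2 ≤ 24 * (n : ℝ) ^ 2 := by
    have h1 := hs2.tsum_le_tsum hle hmaj.summable
    rw [hmaj.tsum_eq] at h1
    have h2 : Real.exp (-n) * S ≤ T := by
      have h4 : S ≤ Real.exp n * T := by
        refine (sq_le_sq₀ hS0 (by positivity)).1 ?_
        refine hST.trans ?_
        rw [mul_pow]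
        gcongr
        have h5 : (2 : ℝ) ≤ Real.exp 1 ^ 2 := by
          have := Real.add_one_le_exp (1 : ℝ)
          nlinarith
        calc (2 : ℝ) ^ n ≤ (Real.exp 1 ^ 2) ^ n := by gcongr
          _ = Real.exp n ^ 2 := by
            rw [← pow_mul, ← Real.exp_nat_mul, ← Real.exp_nat_mul]; congr 1; push_cast; ring
      calc Real.exp (-n) * S ≤ Real.exp (-n) * (Real.exp n * T) := by gcongr
        _ = T := by rw [← mul_assoc, ← Real.exp_add]; simp
    have h3 : 16 * Real.exp (-n) / T * S ≤ 16 := by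
      have : 16 * Real.exp (-n) / T * S = 16 * (Real.exp (-n) * S / T) := by ring
      rw [this]
      have := (div_le_one hTpos).2 h2
      linarith
    nlinarith
  have hs1 : Summable (fun i => Real.exp (-s i) / T * s i) := by
    refine Summable.of_nonneg_of_le (fun i => mul_nonneg (hppos i).le (hs i)) (fun i => ?_)
      (hp.summable.add hs2)
    have := hppos i
    nlinarith [sq_nonneg (s i - 1), mul_nonneg this.le (sq_nonneg (s i - 1)), mul_nonneg this.le (hs i)]
  refine ⟨hp, _, hs1.hasSum, ?_, ?_⟩
  · set m := ∑' i, Real.exp (-s i) / T * s i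
    have : HasSum (fun i => Real.exp (-s i) / T * Real.log (Real.exp (-s i) / T)) (-(m + 1 * Real.log T)) := by
      refine ((hs1.hasSum.add (hp.mul_right (Real.log T))).neg).congr_fun ?_
      intro i
      rw [Real.log_div (Real.exp_pos _).ne' hTpos.ne', Real.log_exp]
      ring
    rw [this.tsum_eq]; ring
  · intro η hη hη1
    set m := ∑' i, Real.exp (-s i) / T * s i
    set A : Set ι := {i | m - n * η ≤ s i}
    have hind : Summable (A.indicator (fun i => Real.exp (-s i) / T)) := hp.summable.indicator A
    by_cases hneg : m - n * η < 0
    · have hAu : A = Set.univ := by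
        ext i
        simp only [A, Set.mem_ofPred_eq, Set.mem_univ, iff_true]
        linarith [hs i]
      rw [hAu, Set.indicator_univ, hp.tsum_eq]
      nlinarith
    push Not at hneg
    have hR : HasSum (fun i => (m - n * η) * (Real.exp (-s i) / T) +
        (η / (48 * n)) * (Real.exp (-s i) / T * s i ^ 2) +
        (12 * n / η) * A.indicator (fun i => Real.exp (-s i) / T) i)
        ((m - n * η) * 1 + (η / (48 * n)) * (∑' i, Real.exp (-s i) / T * s i ^ 2) +
        (12 * n / η) * ∑' i, A.indicator (fun i => Real.exp (-s i) / T) i) :=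
      ((hp.mul_left _).add (hs2.hasSum.mul_left _)).add (hind.hasSum.mul_left _)
    have hnn : (0 : ℝ) < n := by linarith
    have hmain : m ≤ _ := hasSum_le (f := fun i => Real.exp (-s i) / T * s i) ?_ hs1.hasSum hR
    · have h5 : (η / (48 * n)) * (∑' i, Real.exp (-s i) / T * s i ^ 2) ≤ (η / (48 * n)) * (24 * (n : ℝ) ^ 2) := by
        gcongr
      have h6 : (η / (48 * n)) * (24 * (n : ℝ) ^ 2) = n * η / 2 := by field_simp; norm_num
      set I := ∑' i, A.indicator (fun i => Real.exp (-s i) / T) i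
      have h7 : n * η / 2 ≤ 12 * n / η * I := by linarith
      have h8 : 12 * n / η * I = n * (12 * I / η) := by ring
      rw [h8, mul_div_assoc] at h7
      have h9 := le_of_mul_le_mul_left h7 hnn
      rw [le_div_iff₀ hη] at h9
      linarith [h9]
    · intro i
      have hpi := hppos i
      by_cases hi : i ∈ A
      · rw [Set.indicator_of_mem hi]
        have hA : s i ≤ (η / (48 * n)) * s i ^ 2 + 12 * n / η := by
          have : (η / (48 * n)) * s i ^ 2 + 12 * n / η - s i = (η * s i - 24 * n) ^ 2 / (48 * n * η) := by
            field_simp; ring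
          have : 0 ≤ (η * s i - 24 * n) ^ 2 / (48 * n * η) := by positivity
          linarith
        have h11 := mul_le_mul_of_nonneg_left hA hpi.le
        have h12 := mul_nonneg hneg hpi.le
        nlinarith
      · rw [Set.indicator_of_notMem hi]
        have : s i < m - n * η := by
          simpa only [A, Set.mem_ofPred_eq, not_le] using hi
        have h10 : 0 ≤ (η / (48 * n)) * (Real.exp (-s i) / T * s i ^ 2) := by positivity
        nlinarith

lemma gaussF_pos (n : ℕ) {σ : ℝ} (hσ : 0 < σ) (x : EuclideanSpace ℝ (Fin n)) : 0 < gaussF n σ x := by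
  unfold gaussF; positivity

lemma gaussF_cont (n : ℕ) (σ : ℝ) : Continuous (gaussF n σ) := by
  unfold gaussF; fun_prop

lemma gaussF_integral (n : ℕ) {σ : ℝ} (hσ : 0 < σ) : ∫ x, gaussF n σ x = 1 := by
  have h := GaussianFourier.integral_rexp_neg_mul_sq_norm (V := EuclideanSpace ℝ (Fin n))
    (b := 1 / (2 * σ ^ 2)) (by positivity)
  unfold gaussF
  rw [integral_const_mul]
  have e : ∀ x : EuclideanSpace ℝ (Fin n), -‖x‖ ^ 2 / (2 * σ ^ 2) = -(1 / (2 * σ ^ 2)) * ‖x‖ ^ 2 := by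
    intro x; ring
  simp_rw [e]
  rw [h, finrank_euclideanSpace_fin]
  have e2 : π / (1 / (2 * σ ^ 2)) = 2 * π * σ ^ 2 := by field_simp
  rw [e2, ← Real.rpow_add (by positivity)]
  rw [show -(n : ℝ) / 2 + n / 2 = 0 by ring, Real.rpow_zero]

lemma gaussF_integrable (n : ℕ) {σ : ℝ} (hσ : 0 < σ) : Integrable (gaussF n σ) :=
  Integrable.of_integral_ne_zero (by rw [gaussF_integral n hσ]; norm_num)

lemma gaussF_chernoff (n : ℕ) {σ ε : ℝ} (hσ : 0 < σ) (hε : 0 < ε) :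
    ∫ w in {w : EuclideanSpace ℝ (Fin n) | ‖w‖ ^ 2 < n * σ ^ 2 * (1 - ε)}, gaussF n σ w ≤
      Real.exp (-(n * (1 / 2 * Real.log (1 + ε) - ε / 2 * (1 - ε)))) := by
  set b : ℝ := (1 + ε) / (2 * σ ^ 2) with hb
  have hbpos : 0 < b := by positivity
  set K : ℝ := (2 * π * σ ^ 2) ^ (-(n : ℝ) / 2) * Real.exp (ε / 2 * (n * (1 - ε))) with hK
  have hint := GaussianFourier.integral_rexp_neg_mul_sq_norm (V := EuclideanSpace ℝ (Fin n)) hbpos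
  rw [finrank_euclideanSpace_fin] at hint
  have hI : Integrable (fun w : EuclideanSpace ℝ (Fin n) => K * Real.exp (-b * ‖w‖ ^ 2)) := by
    refine Integrable.const_mul ?_ K
    refine Integrable.of_integral_ne_zero ?_
    rw [hint]; positivity
  have hmeas : MeasurableSet {w : EuclideanSpace ℝ (Fin n) | ‖w‖ ^ 2 < n * σ ^ 2 * (1 - ε)} :=
    (isOpen_lt (by fun_prop) (by fun_prop)).measurableSet
  calc _ ≤ ∫ w in {w : EuclideanSpace ℝ (Fin n) | ‖w‖ ^ 2 < n * σ ^ 2 * (1 - ε)}, K * Real.exp (-b * ‖w‖ ^ 2) := by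
        refine setIntegral_mono_on (gaussF_integrable n hσ).integrableOn hI.integrableOn hmeas ?_
        intro w hw
        have hw' : ‖w‖ ^ 2 < n * σ ^ 2 * (1 - ε) := hw
        rw [gaussF, hK, mul_assoc (_ ^ _) (Real.exp _) (Real.exp _), ← Real.exp_add]
        gcongr
        have h1 : ‖w‖ ^ 2 / σ ^ 2 ≤ n * (1 - ε) := by
          rw [div_le_iff₀ (by positivity)]; linarith
        have h2 : -b * ‖w‖ ^ 2 = -‖w‖ ^ 2 / (2 * σ ^ 2) - ε / 2 * (‖w‖ ^ 2 / σ ^ 2) := by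
          rw [hb]; field_simp; ring
        rw [h2]
        nlinarith
    _ ≤ ∫ w, K * Real.exp (-b * ‖w‖ ^ 2) :=
        setIntegral_le_integral hI (Eventually.of_forall fun w => by positivity)
    _ = _ := by
        rw [integral_const_mul, hint, hK]
        have e2 : π / b = (2 * π * σ ^ 2) / (1 + ε) := by rw [hb]; field_simp
        rw [e2, Real.div_rpow (by positivity) (by positivity), neg_div, Real.rpow_neg (by positivity)]
        have h3 : (1 + ε) ^ ((n : ℝ) / 2) = Real.exp (n * (1 / 2 * Real.log (1 + ε))) := by
          rw [Real.rpow_def_of_pos (by positivity)]; congr 1; ring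
        have h4 : 0 < (2 * π * σ ^ 2) ^ ((n : ℝ) / 2) := by positivity
        rw [h3]
        field_simp
        rw [← Real.exp_add]
        congr 1; ring

lemma gaussF_half (n : ℕ) {σ : ℝ} (hσ : 0 < σ) (R : ℝ) (x : EuclideanSpace ℝ (Fin n)) :
    ∫ w in {w : EuclideanSpace ℝ (Fin n) | R ≤ ‖w‖ ^ 2}, gaussF n σ w ≤
    2 * ∫ w in {w : EuclideanSpace ℝ (Fin n) | R ≤ ‖w‖ ^ 2 ∧ ⟪x, w⟫ ≤ 0}, gaussF n σ w := by
  set B := {w : EuclideanSpace ℝ (Fin n) | R ≤ ‖w‖ ^ 2 ∧ ⟪x, w⟫ ≤ 0}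
  set B' := {w : EuclideanSpace ℝ (Fin n) | R ≤ ‖w‖ ^ 2 ∧ 0 ≤ ⟪x, w⟫}
  have hB : MeasurableSet B := by
    refine MeasurableSet.inter (s₁ := {w : EuclideanSpace ℝ (Fin n) | R ≤ ‖w‖ ^ 2}) (s₂ := {w | ⟪x, w⟫ ≤ 0}) ?_ ?_
    · exact (isClosed_le (by fun_prop) (by fun_prop)).measurableSet
    · exact (isClosed_le (by fun_prop) (by fun_prop)).measurableSet
  have hB' : MeasurableSet B' := by
    refine MeasurableSet.inter (s₁ := {w : EuclideanSpace ℝ (Fin n) | R ≤ ‖w‖ ^ 2}) (s₂ := {w | 0 ≤ ⟪x, w⟫}) ?_ ?_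
    · exact (isClosed_le (by fun_prop) (by fun_prop)).measurableSet
    · exact (isClosed_le (by fun_prop) (by fun_prop)).measurableSet
  have hsub : {w : EuclideanSpace ℝ (Fin n) | R ≤ ‖w‖ ^ 2} ⊆ B ∪ B' := by
    intro w hw
    rcases le_total ⟪x, w⟫ 0 with h | h
    · exact Or.inl ⟨hw, h⟩
    · exact Or.inr ⟨hw, h⟩
  have heq : ∫ w in B', gaussF n σ w = ∫ w in B, gaussF n σ w := by
    rw [← integral_indicator hB, ← integral_indicator hB', ← integral_neg_eq_self]
    congr 1
    ext w
    have h1 : -w ∈ B' ↔ w ∈ B := by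
      simp [B, B', Set.mem_ofPred_eq]
    have h2 : gaussF n σ (-w) = gaussF n σ w := by simp [gaussF]
    by_cases h : w ∈ B
    · rw [Set.indicator_of_mem h, Set.indicator_of_mem (h1.2 h), h2]
    · rw [Set.indicator_of_notMem h, Set.indicator_of_notMem (fun h' => h (h1.1 h'))]
  have hI := gaussF_integrable n hσ
  have hnn : ∀ w, 0 ≤ gaussF n σ w := fun w => (gaussF_pos n hσ w).le
  calc _ ≤ ∫ w in B ∪ B', gaussF n σ w :=
        setIntegral_mono_set hI.integrableOn (Eventually.of_forall hnn) hsub.eventuallyLE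
    _ ≤ (∫ w in B, gaussF n σ w) + ∫ w in B', gaussF n σ w := by
        rw [← integral_indicator hB, ← integral_indicator hB', ← integral_indicator (hB.union hB'),
          ← integral_add (hI.indicator hB) (hI.indicator hB')]
        refine integral_mono (hI.indicator (hB.union hB')) ((hI.indicator hB).add (hI.indicator hB')) ?_
        intro w
        simp only [Set.indicator, Set.mem_union]
        have := hnn w
        split_ifs <;> first | linarith | tauto
    _ = _ := by rw [heq]; ring

lemma voronoi_closed (n : ℕ) (S : Set (EuclideanSpace ℝ (Fin n))) : IsClosed (voronoi n S) := by
  have : voronoi n S = ⋂ y ∈ S, {x : EuclideanSpace ℝ (Fin n) | ⟪x, y⟫ ≤ ‖y‖ ^ 2 / 2} := by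
    ext x; simp [voronoi, Set.mem_ofPred_eq]
  rw [this]
  exact isClosed_biInter fun y _ => isClosed_le (by fun_prop) (by fun_prop)

lemma hyperplane_null {n : ℕ} (v : EuclideanSpace ℝ (Fin n)) (hv : v ≠ 0) (c : ℝ) :
    volume {y : EuclideanSpace ℝ (Fin n) | ⟪y, v⟫ = c} = 0 := by
  let A : AffineSubspace ℝ (EuclideanSpace ℝ (Fin n)) :=
    AffineSubspace.comap (innerSL ℝ v).toLinearMap.toAffineMap (AffineSubspace.mk' c ⊥)
  have hA : (A : Set (EuclideanSpace ℝ (Fin n))) = {y | ⟪y, v⟫ = c} := by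
    ext y
    simp [A, AffineSubspace.mem_mk', sub_eq_zero, real_inner_comm]
  rw [← hA]
  refine Measure.addHaar_affineSubspace _ _ ?_
  intro h
  have h0 : (A : Set (EuclideanSpace ℝ (Fin n))) = Set.univ := by rw [h]; rfl
  rw [hA] at h0
  have h1 : (0 : EuclideanSpace ℝ (Fin n)) ∈ {y : EuclideanSpace ℝ (Fin n) | ⟪y, v⟫ = c} := by rw [h0]; trivial
  have h2 : v ∈ {y : EuclideanSpace ℝ (Fin n) | ⟪y, v⟫ = c} := by rw [h0]; trivial
  simp only [Set.mem_ofPred_eq, inner_zero_left] at h1 h2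
  rw [← h1] at h2
  exact hv (inner_self_eq_zero.1 h2)

lemma tiling {n : ℕ} (L : Submodule ℤ (EuclideanSpace ℝ (Fin n))) [DiscreteTopology L]
    {α τ : ℝ} (hα : 0 < α) (hτ : 0 < τ) :
    Summable (fun x : (L : Set (EuclideanSpace ℝ (Fin n))) =>
      ∫ y in {y : EuclideanSpace ℝ (Fin n) | α • y - (x : EuclideanSpace ℝ (Fin n)) ∈
        voronoi n (L : Set (EuclideanSpace ℝ (Fin n)))}, gaussF n τ y) ∧
    ∑' x : (L : Set (EuclideanSpace ℝ (Fin n))),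
      ∫ y in {y : EuclideanSpace ℝ (Fin n) | α • y - (x : EuclideanSpace ℝ (Fin n)) ∈
        voronoi n (L : Set (EuclideanSpace ℝ (Fin n)))}, gaussF n τ y ≤ 1 := by
  set D : ↥(L : Set (EuclideanSpace ℝ (Fin n))) → Set (EuclideanSpace ℝ (Fin n)) := fun x =>
    {y : EuclideanSpace ℝ (Fin n) | α • y - (x : EuclideanSpace ℝ (Fin n)) ∈
        voronoi n (L : Set (EuclideanSpace ℝ (Fin n)))} with hD
  have hI := gaussF_integrable n hτ
  have hnn : ∀ w, 0 ≤ gaussF n τ w := fun w => (gaussF_pos n hτ w).le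
  have hDm : ∀ x, MeasurableSet (D x) := fun x =>
    ((voronoi_closed n _).preimage (by fun_prop : Continuous fun y : EuclideanSpace ℝ (Fin n) =>
      α • y - (x : EuclideanSpace ℝ (Fin n)))).measurableSet
  have hmu : ∀ x, gaussMeasure n τ (D x) = ENNReal.ofReal (∫ y in D x, gaussF n τ y) := by
    intro x
    rw [gaussMeasure, withDensity_apply _ (hDm x),
      ofReal_integral_eq_lintegral_ofReal hI.integrableOn (Eventually.of_forall hnn)]
  have huniv : gaussMeasure n τ Set.univ = 1 := by
    rw [gaussMeasure, withDensity_apply _ MeasurableSet.univ, Measure.restrict_univ,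
      ← ofReal_integral_eq_lintegral_ofReal hI (Eventually.of_forall hnn), gaussF_integral n hτ]
    simp
  have hdis : Pairwise (Function.onFun (AEDisjoint (gaussMeasure n τ)) D) := by
    intro x x' hxx
    have hne : (x' : EuclideanSpace ℝ (Fin n)) - x ≠ 0 := by
      rw [sub_ne_zero]; exact fun h => hxx (Subtype.ext h.symm)
    refine (withDensity_absolutelyContinuous _ _) ?_
    refine measure_mono_null ?_ (hyperplane_null _ hne
      ((‖(x' : EuclideanSpace ℝ (Fin n)) - x‖ ^ 2 / 2 + ⟪(x : EuclideanSpace ℝ (Fin n)), x' - x⟫) / α))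
    rintro y ⟨h1, h2⟩
    have m1 : (x' : EuclideanSpace ℝ (Fin n)) - x ∈ (L : Set (EuclideanSpace ℝ (Fin n))) := L.sub_mem x'.2 x.2
    have m2 : (x : EuclideanSpace ℝ (Fin n)) - x' ∈ (L : Set (EuclideanSpace ℝ (Fin n))) := L.sub_mem x.2 x'.2
    have h1' := h1 _ m1
    have h2' := h2 _ m2
    rw [← neg_sub (x' : EuclideanSpace ℝ (Fin n)) x, norm_neg, inner_neg_right] at h2'
    have h3 := real_inner_self_eq_norm_sq ((x' : EuclideanSpace ℝ (Fin n)) - x)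
    have h4 : α • y - (x' : EuclideanSpace ℝ (Fin n)) = (α • y - x) - (x' - x) := by abel
    rw [h4, inner_sub_left, h3] at h2'
    rw [inner_sub_left, inner_smul_left] at h1' h2'
    simp only [conj_trivial] at h1' h2'
    simp only [Set.mem_ofPred_eq]
    rw [eq_div_iff hα.ne']
    linarith
  have hle : ∑' x, gaussMeasure n τ (D x) ≤ 1 := by
    refine (tsum_meas_le_meas_iUnion_of_disjoint₀ _ (fun x => (hDm x).nullMeasurableSet) hdis).trans ?_
    rw [← huniv]; exact measure_mono (Set.subset_univ _)
  simp_rw [hmu] at hle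
  have hi0 : ∀ x, 0 ≤ ∫ y in D x, gaussF n τ y := fun x => integral_nonneg hnn
  have hs : Summable fun x => ∫ y in D x, gaussF n τ y := by
    have : (∑' x, ENNReal.ofReal (∫ y in D x, gaussF n τ y)) ≠ ∞ := (hle.trans_lt (by simp)).ne
    have h := ENNReal.summable_toReal this
    refine h.congr fun x => ?_
    rw [ENNReal.toReal_ofReal (hi0 x)]
  refine ⟨hs, ?_⟩
  rw [← ENNReal.ofReal_tsum_of_nonneg hi0 hs] at hle
  exact ENNReal.ofReal_le_one.1 hle

lemma lat_stats {n : ℕ} (hn : 1 ≤ n) (L : Submodule ℤ (EuclideanSpace ℝ (Fin n))) [DiscreteTopology L]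
    [IsZLattice ℝ L] {σ : ℝ} (hσ : 0 < σ) :
    ∃ T m : ℝ, 1 ≤ T ∧
      (∀ x, gaussF n σ x / gaussMass n σ (L : Set (EuclideanSpace ℝ (Fin n))) =
        Real.exp (-(‖x‖ ^ 2 / (2 * σ ^ 2))) / T) ∧
      HasSum (fun x : (L : Set (EuclideanSpace ℝ (Fin n))) =>
        Real.exp (-(‖(x : EuclideanSpace ℝ (Fin n))‖ ^ 2 / (2 * σ ^ 2))) / T) 1 ∧
      dgEntropy n σ (L : Set (EuclideanSpace ℝ (Fin n))) = Real.log T + m ∧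
      ∀ η : ℝ, 0 < η → η ≤ 1 → η ^ 2 / 24 ≤
        ∑' x : (L : Set (EuclideanSpace ℝ (Fin n))),
          Set.indicator {x : (L : Set (EuclideanSpace ℝ (Fin n))) |
              m - n * η ≤ ‖(x : EuclideanSpace ℝ (Fin n))‖ ^ 2 / (2 * σ ^ 2)}
            (fun x => Real.exp (-(‖(x : EuclideanSpace ℝ (Fin n))‖ ^ 2 / (2 * σ ^ 2))) / T) x := by
  have ha : 0 < 1 / (2 * σ ^ 2) := by positivity
  let s : ↥(L : Set (EuclideanSpace ℝ (Fin n))) → ℝ := fun x => ‖(x : EuclideanSpace ℝ (Fin n))‖ ^ 2 / (2 * σ ^ 2)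
  have e1 : ∀ x : ↥(L : Set (EuclideanSpace ℝ (Fin n))), 1 / (2 * σ ^ 2) * ‖(x : EuclideanSpace ℝ (Fin n))‖ ^ 2 = s x := by
    intro x; simp only [s]; ring
  have e2 : ∀ x : ↥(L : Set (EuclideanSpace ℝ (Fin n))), 1 / (2 * σ ^ 2) / 2 * ‖(x : EuclideanSpace ℝ (Fin n))‖ ^ 2 = s x / 2 := by
    intro x; simp only [s]; ring
  have hT : Summable fun x : ↥(L : Set (EuclideanSpace ℝ (Fin n))) =>
      Real.exp (-(1 / (2 * σ ^ 2) * ‖(x : EuclideanSpace ℝ (Fin n))‖ ^ 2)) := lat_summable L ha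
  have hS : Summable fun x : ↥(L : Set (EuclideanSpace ℝ (Fin n))) =>
      Real.exp (-(1 / (2 * σ ^ 2) / 2 * ‖(x : EuclideanSpace ℝ (Fin n))‖ ^ 2)) := lat_summable L (half_pos ha)
  have hST : (∑' x : ↥(L : Set (EuclideanSpace ℝ (Fin n))), Real.exp (-(1 / (2 * σ ^ 2) / 2 * ‖(x : EuclideanSpace ℝ (Fin n))‖ ^ 2))) ^ 2 ≤
    2 ^ n * (∑' x : ↥(L : Set (EuclideanSpace ℝ (Fin n))), Real.exp (-(1 / (2 * σ ^ 2) * ‖(x : EuclideanSpace ℝ (Fin n))‖ ^ 2))) ^ 2 :=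
    lat_doubling L ha
  simp_rw [e1] at hT hST
  simp_rw [e2] at hS hST
  set T := ∑' x, Real.exp (-s x) with hTdef
  have hT1 : 1 ≤ T := by
    have := hT.le_tsum ⟨0, L.zero_mem⟩ (fun _ _ => (Real.exp_pos _).le)
    have h0 : s ⟨0, L.zero_mem⟩ = 0 := by simp [s]
    rw [h0] at this
    simpa only [neg_zero, Real.exp_zero] using this
  have hT0 : 0 < T := by linarith
  obtain ⟨hp, m, -, hent, hη⟩ := abs_stats s (fun x => by simp only [s]; positivity) n hn T _ hT.hasSum hS.hasSum
    hT0 hST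
  have hK : 0 < (2 * π * σ ^ 2) ^ (-(n : ℝ) / 2) := by positivity
  have hmass : gaussMass n σ (L : Set (EuclideanSpace ℝ (Fin n))) = (2 * π * σ ^ 2) ^ (-(n : ℝ) / 2) * T := by
    rw [gaussMass, hTdef, ← tsum_mul_left]
    refine tsum_congr fun x => ?_
    rw [gaussF, neg_div (2 * σ ^ 2)]
  have hpx : ∀ x, gaussF n σ x / gaussMass n σ (L : Set (EuclideanSpace ℝ (Fin n))) =
        Real.exp (-(‖x‖ ^ 2 / (2 * σ ^ 2))) / T := by
    intro x
    rw [hmass, gaussF, neg_div (2 * σ ^ 2), mul_div_mul_left _ _ hK.ne']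
  refine ⟨T, m, hT1, hpx, hp, ?_, hη⟩
  rw [← hent, dgEntropy]
  congr 1
  refine tsum_congr fun x => ?_
  rw [hpx]

lemma exponent_ineq (n δ s r om q u lT m l : ℝ) (hn : 1 ≤ n) (hδ : 0 < δ)
    (hr0 : 0 ≤ r) (hr : r ≤ 1) (hq0 : 0 ≤ q) (hq : 1 - q = u * r) (hu : 0 ≤ u)
    (hs : m - n * δ ≤ s) (hom : n * (1 - δ) / 2 ≤ om) (hlT : 0 ≤ lT)
    (h1 : n * (l / 2 + 3 * δ) ≤ lT + m) (h2 : lT + m ≤ n * u / 2) :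
    -s - lT + n / 2 * l - om ≤ -(n * δ) - (s * r + om * q) := by
  have a1 := mul_le_mul_of_nonneg_right hs (sub_nonneg.2 hr)
  have hur : 0 ≤ u * r := mul_nonneg hu hr0
  have a2 := mul_le_mul_of_nonneg_right hom hur
  have a3 : m * r ≤ n * u / 2 * r := mul_le_mul_of_nonneg_right (by linarith) hr0
  have hnd : 0 < n * δ := by positivity
  have a4 : n * δ * (u * r) ≤ n * δ * 1 := mul_le_mul_of_nonneg_left (by linarith) hnd.le
  have a5 : 0 ≤ n * δ * r := by positivity
  have hq' : q = 1 - u * r := by linarith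
  rw [hq']
  nlinarith

lemma pe_lower {n : ℕ} (hn : 1 ≤ n) (L : Submodule ℤ (EuclideanSpace ℝ (Fin n))) [DiscreteTopology L]
    [IsZLattice ℝ L] {σs σw α δ : ℝ} (hσs : 0 < σs) (hσw : 0 < σw) (hsnr : σs ^ 2 < σw ^ 2)
    (hα : 0 < α) (hδ : 0 < δ) (hδ1 : δ ≤ 1)
    (h1 : n * (Real.log (1 + (σs ^ 2 / σw ^ 2) ^ 2) / 2 + 3 * δ) ≤
      dgEntropy n σs (L : Set (EuclideanSpace ℝ (Fin n))))
    (h2 : dgEntropy n σs (L : Set (EuclideanSpace ℝ (Fin n))) ≤ n * (σs ^ 2 / σw ^ 2) / 2)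
    (h3 : Real.exp (-(n * (1 / 2 * Real.log (1 + δ) - δ / 2 * (1 - δ)))) ≤ 1 / 2)
    (Pe : ℝ)
    (hPe : Pe = ∑' x : (L : Set (EuclideanSpace ℝ (Fin n))),
        (gaussF n σs x / gaussMass n σs (L : Set (EuclideanSpace ℝ (Fin n)))) *
          ∫ w in {w : EuclideanSpace ℝ (Fin n) |
              (α - 1) • (x : EuclideanSpace ℝ (Fin n)) + α • w ∉
                voronoi n (L : Set (EuclideanSpace ℝ (Fin n)))},
            gaussF n σw w) :
    δ ^ 2 / 24 * (1 / 4) - Real.exp (-(n * δ)) ≤ Pe ∧ Pe ≤ 1 := by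
  obtain ⟨T, m, hT1, hpx, hp, hent, hη⟩ := lat_stats hn L hσs
  rw [hent] at h1 h2
  have hT0 : 0 < T := by linarith
  set u := σs ^ 2 / σw ^ 2 with hu
  have hu0 : 0 < u := by positivity
  set τ := Real.sqrt (σw ^ 2 + u * σs ^ 2) with hτ
  have hτ2 : τ ^ 2 = σw ^ 2 + u * σs ^ 2 := Real.sq_sqrt (by positivity)
  have hτ0 : 0 < τ := Real.sqrt_pos.2 (by positivity)
  have hratio : τ ^ 2 = σw ^ 2 * (1 + u ^ 2) := by
    rw [hτ2, hu]; field_simp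
  obtain ⟨hts, htle⟩ := tiling L hα hτ0
  set V := voronoi n (L : Set (EuclideanSpace ℝ (Fin n))) with hV
  have hfI := gaussF_integrable n hσw
  have hf0 : ∀ w, 0 ≤ gaussF n σw w := fun w => (gaussF_pos n hσw w).le
  have hqI := gaussF_integrable n hτ0
  have hq0 : ∀ w, 0 ≤ gaussF n τ w := fun w => (gaussF_pos n hτ0 w).le
  let p : ↥(L : Set (EuclideanSpace ℝ (Fin n))) → ℝ := fun x =>
    Real.exp (-(‖(x : EuclideanSpace ℝ (Fin n))‖ ^ 2 / (2 * σs ^ 2))) / T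
  have hp0 : ∀ x, 0 ≤ p x := fun x => by simp only [p]; positivity
  let Er : ↥(L : Set (EuclideanSpace ℝ (Fin n))) → Set (EuclideanSpace ℝ (Fin n)) := fun x =>
    {w | (α - 1) • (x : EuclideanSpace ℝ (Fin n)) + α • w ∉ V}
  let Co : ↥(L : Set (EuclideanSpace ℝ (Fin n))) → Set (EuclideanSpace ℝ (Fin n)) := fun x =>
    {w | (α - 1) • (x : EuclideanSpace ℝ (Fin n)) + α • w ∈ V}
  let D : ↥(L : Set (EuclideanSpace ℝ (Fin n))) → Set (EuclideanSpace ℝ (Fin n)) := fun x =>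
    {y | α • y - (x : EuclideanSpace ℝ (Fin n)) ∈ V}
  let B : ↥(L : Set (EuclideanSpace ℝ (Fin n))) → Set (EuclideanSpace ℝ (Fin n)) := fun x =>
    {w | n * σw ^ 2 * (1 - δ) ≤ ‖w‖ ^ 2 ∧ ⟪(x : EuclideanSpace ℝ (Fin n)), w⟫ ≤ 0}
  have hPe' : Pe = ∑' x, p x * ∫ w in Er x, gaussF n σw w := by
    rw [hPe]
    refine tsum_congr fun x => ?_
    rw [hpx]
  have hCm : ∀ x, MeasurableSet (Co x) := fun x =>
    ((voronoi_closed n _).preimage (by fun_prop : Continuous fun w : EuclideanSpace ℝ (Fin n) =>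
      (α - 1) • (x : EuclideanSpace ℝ (Fin n)) + α • w)).measurableSet
  have hDm : ∀ x, MeasurableSet (D x) := fun x =>
    ((voronoi_closed n _).preimage (by fun_prop : Continuous fun w : EuclideanSpace ℝ (Fin n) =>
      α • w - (x : EuclideanSpace ℝ (Fin n)))).measurableSet
  have hBm : ∀ x, MeasurableSet (B x) := by
    intro x
    refine MeasurableSet.inter (s₁ := {w : EuclideanSpace ℝ (Fin n) | n * σw ^ 2 * (1 - δ) ≤ ‖w‖ ^ 2})
      (s₂ := {w | ⟪(x : EuclideanSpace ℝ (Fin n)), w⟫ ≤ 0}) ?_ ?_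
    · exact (isClosed_le (by fun_prop) (by fun_prop)).measurableSet
    · exact (isClosed_le (by fun_prop) (by fun_prop)).measurableSet
  -- error probabilities lie in [0,1]
  have he0 : ∀ x, 0 ≤ ∫ w in Er x, gaussF n σw w := fun x => integral_nonneg hf0
  have he1 : ∀ x, ∫ w in Er x, gaussF n σw w ≤ 1 := fun x => by
    rw [← gaussF_integral n hσw]
    exact setIntegral_le_integral hfI (Eventually.of_forall hf0)
  have hterm : ∀ x, p x * ∫ w in Er x, gaussF n σw w ≤ p x := fun x =>
    mul_le_of_le_one_right (hp0 x) (he1 x)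
  have hPs : Summable fun x => p x * ∫ w in Er x, gaussF n σw w :=
    Summable.of_nonneg_of_le (fun x => mul_nonneg (hp0 x) (he0 x)) hterm hp.summable
  refine ⟨?_, ?_⟩
  swap
  · rw [hPe', ← hp.tsum_eq]
    exact hPs.tsum_le_tsum hterm hp.summable
  -- noise event has probability at least 1/4
  have hB4 : ∀ x, 1 / 4 ≤ ∫ w in B x, gaussF n σw w := by
    intro x
    have a1 := gaussF_half n hσw (n * σw ^ 2 * (1 - δ)) (x : EuclideanSpace ℝ (Fin n))
    have a2 := (gaussF_chernoff n hσw hδ).trans h3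
    have hm : MeasurableSet {w : EuclideanSpace ℝ (Fin n) | ‖w‖ ^ 2 < n * σw ^ 2 * (1 - δ)} :=
      (isOpen_lt (by fun_prop) (by fun_prop)).measurableSet
    have a3 := integral_add_compl hm hfI
    have a4 : {w : EuclideanSpace ℝ (Fin n) | ‖w‖ ^ 2 < n * σw ^ 2 * (1 - δ)}ᶜ =
        {w : EuclideanSpace ℝ (Fin n) | n * σw ^ 2 * (1 - δ) ≤ ‖w‖ ^ 2} := by
      ext w; simp [Set.mem_ofPred_eq]
    rw [a4, gaussF_integral n hσw] at a3
    change _ ≤ 2 * ∫ w in B x, gaussF n σw w at a1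
    linarith
  let A : Set ↥(L : Set (EuclideanSpace ℝ (Fin n))) :=
    {x | m - n * δ ≤ ‖(x : EuclideanSpace ℝ (Fin n))‖ ^ 2 / (2 * σs ^ 2)}
  -- pointwise comparison
  have hpt : ∀ x ∈ A, ∀ w ∈ B x, p x * gaussF n σw w ≤
      Real.exp (-(n * δ)) * gaussF n τ ((x : EuclideanSpace ℝ (Fin n)) + w) := by
    rintro x hx w ⟨hw1, hw2⟩
    have hx' : m - n * δ ≤ ‖(x : EuclideanSpace ℝ (Fin n))‖ ^ 2 / (2 * σs ^ 2) := hx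
    have hpre : (2 * π * σw ^ 2) ^ (-(n : ℝ) / 2) =
        (2 * π * τ ^ 2) ^ (-(n : ℝ) / 2) * Real.exp (n / 2 * Real.log (1 + u ^ 2)) := by
      rw [hratio, show 2 * π * (σw ^ 2 * (1 + u ^ 2)) = (2 * π * σw ^ 2) * (1 + u ^ 2) by ring,
        Real.mul_rpow (x := 2 * π * σw ^ 2) (by positivity) (by positivity), Real.rpow_def_of_pos (show 0 < 1 + u ^ 2 by positivity),
        mul_assoc (_ ^ _) (Real.exp _) (Real.exp _), ← Real.exp_add]
      rw [show Real.log (1 + u ^ 2) * (-(n : ℝ) / 2) + n / 2 * Real.log (1 + u ^ 2) = 0 by ring]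
      simp
    have hTe : p x = Real.exp (-(‖(x : EuclideanSpace ℝ (Fin n))‖ ^ 2 / (2 * σs ^ 2)) - Real.log T) := by
      simp only [p]
      rw [Real.exp_sub, Real.exp_log hT0]
    have hnorm : ‖(x : EuclideanSpace ℝ (Fin n)) + w‖ ^ 2 ≤ ‖(x : EuclideanSpace ℝ (Fin n))‖ ^ 2 + ‖w‖ ^ 2 := by
      rw [norm_add_sq_real]; linarith
    have hτpos : 0 < τ ^ 2 := by positivity
    have key := exponent_ineq n δ (‖(x : EuclideanSpace ℝ (Fin n))‖ ^ 2 / (2 * σs ^ 2)) (σs ^ 2 / τ ^ 2)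
      (‖w‖ ^ 2 / (2 * σw ^ 2)) (σw ^ 2 / τ ^ 2) u (Real.log T) m (Real.log (1 + u ^ 2))
      (by exact_mod_cast hn) hδ (by positivity)
      (by rw [div_le_one hτpos, hτ2]; nlinarith [mul_pos hu0 (pow_pos hσs 2)])
      (by positivity)
      (by rw [eq_comm, ← mul_div_assoc, eq_sub_iff_add_eq, ← add_div, div_eq_one_iff_eq hτpos.ne', hτ2]; ring)
      hu0.le hx'
      (by rw [le_div_iff₀ (by positivity)]; linarith)
      (Real.log_nonneg hT1) h1 h2
    have hk2 : ‖(x : EuclideanSpace ℝ (Fin n))‖ ^ 2 / (2 * σs ^ 2) * (σs ^ 2 / τ ^ 2) +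
        ‖w‖ ^ 2 / (2 * σw ^ 2) * (σw ^ 2 / τ ^ 2) =
        (‖(x : EuclideanSpace ℝ (Fin n))‖ ^ 2 + ‖w‖ ^ 2) / (2 * τ ^ 2) := by
      field_simp
    rw [hk2] at key
    have hk3 : ‖(x : EuclideanSpace ℝ (Fin n)) + w‖ ^ 2 / (2 * τ ^ 2) ≤
        (‖(x : EuclideanSpace ℝ (Fin n))‖ ^ 2 + ‖w‖ ^ 2) / (2 * τ ^ 2) := by gcongr
    set Kc := (2 * π * τ ^ 2) ^ (-(n : ℝ) / 2) with hKc
    have hKc0 : 0 < Kc := by positivity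
    rw [hTe, gaussF, gaussF, hpre, ← hKc]
    calc _ = Kc * Real.exp (-(‖(x : EuclideanSpace ℝ (Fin n))‖ ^ 2 / (2 * σs ^ 2)) - Real.log T +
            n / 2 * Real.log (1 + u ^ 2) + -‖w‖ ^ 2 / (2 * σw ^ 2)) := by
          rw [Real.exp_add, Real.exp_add]; ring
      _ ≤ Kc * Real.exp (-(n * δ) + -‖(x : EuclideanSpace ℝ (Fin n)) + w‖ ^ 2 / (2 * τ ^ 2)) := by
          refine mul_le_mul_of_nonneg_left (Real.exp_le_exp.2 ?_) hKc0.le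
          rw [neg_div, neg_div]
          linarith
      _ = _ := by rw [Real.exp_add]; ring
  have htrans : ∀ x, ∫ w in Co x, gaussF n τ ((x : EuclideanSpace ℝ (Fin n)) + w) = ∫ y in D x, gaussF n τ y := by
    intro x
    rw [← integral_indicator (hCm x), ← integral_indicator (hDm x),
      ← integral_add_left_eq_self ((D x).indicator (gaussF n τ)) (x : EuclideanSpace ℝ (Fin n))]
    congr 1
    ext w
    have hiff : (x : EuclideanSpace ℝ (Fin n)) + w ∈ D x ↔ w ∈ Co x := by
      have : α • ((x : EuclideanSpace ℝ (Fin n)) + w) - (x : EuclideanSpace ℝ (Fin n)) =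
        (α - 1) • (x : EuclideanSpace ℝ (Fin n)) + α • w := by module
      simp only [D, Co, Set.mem_ofPred_eq, this]
    by_cases h : w ∈ Co x
    · rw [Set.indicator_of_mem h, Set.indicator_of_mem (hiff.2 h)]
    · rw [Set.indicator_of_notMem h, Set.indicator_of_notMem (fun h' => h (hiff.1 h'))]
  have hmain : ∀ x, (1 / 4) * A.indicator p x - Real.exp (-(n * δ)) * ∫ y in D x, gaussF n τ y ≤
      p x * ∫ w in Er x, gaussF n σw w := by
    intro x
    have hd0 : 0 ≤ ∫ y in D x, gaussF n τ y := integral_nonneg hq0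
    by_cases hx : x ∈ A
    · rw [Set.indicator_of_mem hx]
      have b1 : p x * ∫ w in B x ∩ Co x, gaussF n σw w ≤ Real.exp (-(n * δ)) * ∫ y in D x, gaussF n τ y := by
        have hqs : Integrable (fun w => Real.exp (-(n * δ)) * gaussF n τ ((x : EuclideanSpace ℝ (Fin n)) + w)) :=
          (hqI.comp_add_left _).const_mul _
        rw [← htrans x, ← integral_const_mul, ← integral_const_mul]
        calc _ ≤ ∫ w in B x ∩ Co x, Real.exp (-(n * δ)) * gaussF n τ ((x : EuclideanSpace ℝ (Fin n)) + w) :=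
              setIntegral_mono_on (hfI.const_mul _).integrableOn hqs.integrableOn ((hBm x).inter (hCm x))
                (fun w hw => hpt x hx w hw.1)
          _ ≤ _ := setIntegral_mono_set hqs.integrableOn
                (Eventually.of_forall fun w => mul_nonneg (Real.exp_pos _).le (hq0 _))
                (Set.inter_subset_right).eventuallyLE
      have b2 := integral_inter_add_sdiff (μ := volume) (s := B x) (hCm x) hfI.integrableOn
      have b3 : ∫ w in B x \ Co x, gaussF n σw w ≤ ∫ w in Er x, gaussF n σw w :=
        setIntegral_mono_set hfI.integrableOn (Eventually.of_forall hf0)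
          ((show B x \ Co x ⊆ Er x from fun w hw => hw.2).eventuallyLE)
      have b4 := hB4 x
      have b5 : p x * (1 / 4) ≤ p x * ((∫ w in B x ∩ Co x, gaussF n σw w) + ∫ w in Er x, gaussF n σw w) :=
        mul_le_mul_of_nonneg_left (by linarith) (hp0 x)
      rw [mul_add] at b5
      linarith
    · rw [Set.indicator_of_notMem hx]
      have c1 := mul_nonneg (hp0 x) (he0 x)
      have c2 := mul_nonneg (Real.exp_pos (-(n * δ))).le hd0
      linarith
  have hAs : Summable (A.indicator p) := hp.summable.indicator A
  have hfin := hasSum_le hmain ((hAs.hasSum.mul_left (1 / 4)).sub (hts.hasSum.mul_left (Real.exp (-(n * δ))))) hPs.hasSum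
  rw [← hPe'] at hfin
  have d1 : δ ^ 2 / 24 ≤ ∑' x, A.indicator p x := hη δ hδ hδ1
  have d2 := mul_le_mul_of_nonneg_left htle (Real.exp_pos (-(n * δ))).le
  linarith

/-- Converse: if `σ_s² < σ_w²` and the per-symbol entropies of the centered
discrete Gaussians `D_{Λ_n,σ_s}` tend to capacity `(1/2)log(1+σ_s²/σ_w²)`, then the MAP error
probabilities `P_e(Λ_n)` are bounded away from `0`. -/
theorem converse_low_snr (σs σw : ℝ) (hσs : 0 < σs) (hσw : 0 < σw)
    (hsnr : σs ^ 2 < σw ^ 2)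
    (α : ℝ) (hα : α = σs ^ 2 / (σs ^ 2 + σw ^ 2))
    (L : ∀ n : ℕ, Submodule ℤ (EuclideanSpace ℝ (Fin n)))
    (hdisc : ∀ n, DiscreteTopology (L n))
    (hlat : ∀ n, @IsZLattice ℝ _ _ _ _ (L n) (hdisc n))
    (Pe : ℕ → ℝ)
    (hPe : ∀ n, Pe n = ∑' x : (L n : Set (EuclideanSpace ℝ (Fin n))),
        (gaussF n σs x / gaussMass n σs (L n : Set (EuclideanSpace ℝ (Fin n)))) *
          ∫ w in {w : EuclideanSpace ℝ (Fin n) |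
              (α - 1) • (x : EuclideanSpace ℝ (Fin n)) + α • w ∉
                voronoi n (L n : Set (EuclideanSpace ℝ (Fin n)))},
            gaussF n σw w)
    (hH : Filter.Tendsto
        (fun n : ℕ => (1 / (n : ℝ)) *
          dgEntropy n σs (L n : Set (EuclideanSpace ℝ (Fin n))))
        Filter.atTop (nhds ((1 / 2) * Real.log (1 + σs ^ 2 / σw ^ 2)))) :
    0 < Filter.liminf Pe Filter.atTop := by
  set u := σs ^ 2 / σw ^ 2 with hu
  have hu0 : 0 < u := by positivity
  have hu1 : u < 1 := by rw [hu, div_lt_one (by positivity)]; exact hsnr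
  have hα0 : 0 < α := by rw [hα]; positivity
  have hlog1 : Real.log (1 + u ^ 2) < Real.log (1 + u) :=
    Real.log_lt_log (by positivity) (by nlinarith)
  have hlog2 : Real.log (1 + u) < u := by
    have := Real.log_lt_sub_one_of_pos (show 0 < 1 + u by positivity) (by linarith)
    linarith
  obtain ⟨δ, hδ, hδ1, hδg⟩ : ∃ δ : ℝ, 0 < δ ∧ δ ≤ 1 ∧
      4 * δ ≤ 1 / 2 * Real.log (1 + u) - Real.log (1 + u ^ 2) / 2 := by
    refine ⟨min 1 ((1 / 2 * Real.log (1 + u) - Real.log (1 + u ^ 2) / 2) / 4), ?_, min_le_left _ _, ?_⟩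
    · exact lt_min one_pos (by linarith)
    · have := min_le_right 1 ((1 / 2 * Real.log (1 + u) - Real.log (1 + u ^ 2) / 2) / 4)
      linarith
  have hc : 0 < 1 / 2 * Real.log (1 + δ) - δ / 2 * (1 - δ) := by
    have h1 := Real.one_sub_inv_le_log_of_pos (show 0 < 1 + δ by positivity)
    have h2 : δ * (1 - δ) < 1 - (1 + δ)⁻¹ := by
      have : 1 - (1 + δ)⁻¹ - δ * (1 - δ) = δ ^ 3 / (1 + δ) := by field_simp; ring
      have : 0 < δ ^ 3 / (1 + δ) := by positivity
      linarith
    linarith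
  have htend : ∀ c : ℝ, 0 < c → Tendsto (fun n : ℕ => Real.exp (-((n : ℝ) * c))) atTop (nhds 0) := by
    intro c hc
    exact Real.tendsto_exp_neg_atTop_nhds_zero.comp
      (tendsto_natCast_atTop_atTop.atTop_mul_const hc)
  have ev1 := (htend _ hc).eventually (gt_mem_nhds (show (0 : ℝ) < 1 / 2 by norm_num))
  have ev2 := (htend _ hδ).eventually (gt_mem_nhds (show (0 : ℝ) < δ ^ 2 / 24 / 8 by positivity))
  have ev3 := hH.eventually (lt_mem_nhds (show 1 / 2 * Real.log (1 + u) - δ < 1 / 2 * Real.log (1 + u) by linarith))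
  have ev4 := hH.eventually (gt_mem_nhds (show 1 / 2 * Real.log (1 + u) < u / 2 by linarith))
  have hall : ∀ᶠ n in atTop, δ ^ 2 / 24 / 8 ≤ Pe n ∧ Pe n ≤ 1 := by
    filter_upwards [ev1, ev2, ev3, ev4, eventually_ge_atTop 1] with n e1 e2 e3 e4 hn
    have hn0 : (0 : ℝ) < n := by exact_mod_cast hn
    have := hdisc n
    have := hlat n
    set H := dgEntropy n σs (L n : Set (EuclideanSpace ℝ (Fin n))) with hHdef
    have hHn : H = n * (1 / n * H) := by field_simp
    have hb := pe_lower hn (L n) hσs hσw hsnr hα0 hδ hδ1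
      (by
        rw [← hHdef, hHn]
        refine mul_le_mul_of_nonneg_left ?_ hn0.le
        linarith)
      (by
        rw [← hHdef, hHn, mul_div_assoc]
        refine mul_le_mul_of_nonneg_left ?_ hn0.le
        linarith) e1.le (Pe n) (hPe n)
    exact ⟨by linarith [hb.1], hb.2⟩
  have hpos : 0 < δ ^ 2 / 24 / 8 := by positivity
  refine hpos.trans_le (le_liminf_of_le ?_ (hall.mono fun n h => h.1))
  exact (isBoundedUnder_of_eventually_le (hall.mono fun n h => h.2)).isCoboundedUnder_ge
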